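/- Let d ≥ 1 be an integer, m ∈ ℝ, and let J : ℝ^d → ℝ be continuous. Let S = {α ∈ ℝ^d : 0 ≤ α₁ ≤ … ≤ α_d ≤ 1/4 and (4/π)·Σ_{i=1}^{d}(−1)^{i+1}·cos(2πα_i) = m}, and for each k ∈ ℕ let S_k = {α ∈ ℝ^d : 0 ≤ α₁ ≤ … ≤ α_d ≤ 1/4 and m − Δm_k ≤ (4/π)·Σ_{i=1}^{d}(−1)^{i+1}·Γ_k(α_i) ≤ m + Δm_k}. If S is nonempty, then the optimal values of the relaxed problems converge to the optimal value of the exact problem: lim_{k→∞} inf_{α ∈ S_k} J(α) = inf_{α ∈ S} J(α). -/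

import Mathlib

open Real

/-- The degree-`k` Taylor polynomial of `f(α) = cos(2πα)` about the expansion point `α₀`,
`Γ_k(α) = Σ_{n=0}^{k} f⁽ⁿ⁾(α₀)·(α − α₀)^n/n!`, evaluated at `α`. -/
noncomputable def taylorCos (k : ℕ) (α₀ α : ℝ) : ℝ :=
  ∑ n ∈ Finset.range (k + 1),
    iteratedDeriv n (fun t : ℝ => Real.cos (2 * π * t)) α₀ / n.factorial * (α - α₀) ^ n

/-- The modulation-index error bound Δm_k = (4d/π)·(2π)^{k+1}·(1/8)^{k+1}/(k+1)!. -/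
noncomputable def deltaM (d k : ℕ) : ℝ :=
  (4 * (d : ℝ) / π) * (2 * π) ^ (k + 1) * (1 / 8 : ℝ) ^ (k + 1) / (k + 1).factorial

/-- The exact OPP feasible set S: vectors α ∈ ℝ^d with 0 ≤ α₁ ≤ … ≤ α_d ≤ 1/4 satisfying
(4/π)·Σ_{i=1}^d (−1)^{i+1}·cos(2πα_i) = m (0-based indexing turns (−1)^{i+1} into (−1)^i). -/
def exactSet (d : ℕ) (m : ℝ) : Set (Fin d → ℝ) :=
  {α | Monotone α ∧ (∀ i, 0 ≤ α i) ∧ (∀ i, α i ≤ 1 / 4) ∧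
    (4 / π) * ∑ i : Fin d, (-1 : ℝ) ^ (i : ℕ) * Real.cos (2 * π * α i) = m}

/-- The level-k Taylor relaxed feasible set S_k: the equality constraint is replaced by
m − Δm_k ≤ (4/π)·Σ_{i=1}^d (−1)^{i+1}·Γ_k(α_i) ≤ m + Δm_k. -/
noncomputable def relaxedSet (d : ℕ) (m : ℝ) (k : ℕ) : Set (Fin d → ℝ) :=
  {α | Monotone α ∧ (∀ i, 0 ≤ α i) ∧ (∀ i, α i ≤ 1 / 4) ∧
    m - deltaM d k ≤ (4 / π) * ∑ i : Fin d, (-1 : ℝ) ^ (i : ℕ) * taylorCos k (1 / 8) (α i) ∧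
    (4 / π) * ∑ i : Fin d, (-1 : ℝ) ^ (i : ℕ) * taylorCos k (1 / 8) (α i) ≤ m + deltaM d k}

open Filter Topology

/-- A stability principle for relaxed constraints: if the feasible sets `T k` are squeezed between the
level set `{x ∈ K | g x = m}` of a compact set `K` and the slabs `{x ∈ K | |g x - m| ≤ ε k}` with
`ε k → 0`, then the infima of `J` over `T k` converge to the infimum over the level set. -/
theorem tendsto_sInf_image_of_squeeze_level {X : Type*} [TopologicalSpace X] {K S : Set X}
    {T : ℕ → Set X} {g J : X → ℝ} {m : ℝ} {ε : ℕ → ℝ} (hK : IsCompact K) (hg : Continuous g)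
    (hJ : Continuous J) (hε : Tendsto ε atTop (𝓝 0)) (hS : S.Nonempty)
    (hlevel : ∀ x ∈ K, g x = m → x ∈ S) (hST : ∀ k, S ⊆ T k) (hTK : ∀ k, T k ⊆ K)
    (hTε : ∀ k, ∀ x ∈ T k, |g x - m| ≤ ε k) :
    Tendsto (fun k => sInf (J '' T k)) atTop (𝓝 (sInf (J '' S))) := by
  have hbdd : ∀ k, BddBelow (J '' T k) := fun k =>
    (hK.bddBelow_image hJ.continuousOn).mono (Set.image_mono (hTK k))
  have hbddS : BddBelow (J '' S) := (hbdd 0).mono (Set.image_mono (hST 0))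
  refine tendsto_order.2 ⟨fun a ha => ?_, fun a ha => Eventually.of_forall fun k =>
    (csInf_le_csInf (hbdd k) (hS.image J) (Set.image_mono (hST k))).trans_lt ha⟩
  obtain ⟨c, hac, hc⟩ := exists_between ha
  have hC : IsCompact (K ∩ {x | J x ≤ c}) := hK.inter_right (isClosed_le hJ continuous_const)
  have hpos : ∀ x ∈ K ∩ {x | J x ≤ c}, 0 < |g x - m| := by
    rintro x ⟨hxK, hxc⟩
    refine abs_pos.2 fun h => ?_
    have hxS := hlevel x hxK (sub_eq_zero.1 h)
    exact absurd (csInf_le hbddS (Set.mem_image_of_mem J hxS)) (not_le.2 (lt_of_le_of_lt hxc hc))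
  obtain ⟨r, hr, hmin⟩ := hC.exists_forall_le' (f := fun x => |g x - m|)
    (by fun_prop) hpos
  filter_upwards [hε.eventually_lt_const hr] with k hk
  refine hac.trans_le (le_csInf ((hS.mono (hST k)).image J) ?_)
  rintro _ ⟨x, hx, rfl⟩
  by_contra! h
  exact absurd (hmin x ⟨hTK k hx, h.le⟩) (not_le.2 ((hTε k x hx).trans_lt hk))

theorem abs_iteratedDeriv_cos_const_mul_le (n : ℕ) {c : ℝ} (hc : 0 ≤ c) (x : ℝ) :
    |iteratedDeriv n (fun t : ℝ => Real.cos (c * t)) x| ≤ c ^ n := by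
  rw [iteratedDeriv_comp_const_mul Real.contDiff_cos, abs_mul, abs_of_nonneg (pow_nonneg hc n)]
  exact mul_le_of_le_one_right (pow_nonneg hc n) (Real.abs_iteratedDeriv_cos_le_one n _)

/-- Lagrange remainder bound for the Taylor polynomial of `cos (2πα)`. -/
theorem abs_cos_sub_taylorCos_le (k : ℕ) (x₀ x : ℝ) :
    |Real.cos (2 * π * x) - taylorCos k x₀ x| ≤
      (2 * π) ^ (k + 1) * |x - x₀| ^ (k + 1) / (k + 1).factorial := by
  have hcd : ∀ n : ℕ, ContDiff ℝ n (fun t : ℝ => Real.cos (2 * π * t)) := fun n => by fun_prop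
  rcases eq_or_ne x₀ x with rfl | hx
  · simp [taylorCos, Finset.sum_range_succ', iteratedDeriv_zero]
  · obtain ⟨y, -, hy⟩ := taylor_mean_remainder_lagrange_iteratedDeriv (n := k) hx
      (by exact_mod_cast (hcd (k + 1)).contDiffOn)
    have htaylor : taylorWithinEval (fun t : ℝ => Real.cos (2 * π * t)) k (Set.uIcc x₀ x) x₀ x =
        taylorCos k x₀ x := by
      rw [taylor_within_apply, taylorCos]
      refine Finset.sum_congr rfl fun n _ => ?_
      rw [iteratedDerivWithin_eq_iteratedDeriv (uniqueDiffOn_uIcc hx) (hcd n).contDiffAt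
        Set.left_mem_uIcc, smul_eq_mul]
      ring
    rw [← htaylor, hy, abs_div, abs_mul, abs_pow, Nat.abs_cast]
    gcongr
    exact abs_iteratedDeriv_cos_const_mul_le _ (by positivity) _

theorem abs_cos_sub_taylorCos_sum_le {d : ℕ} (k : ℕ) {α : Fin d → ℝ} (h0 : ∀ i, 0 ≤ α i)
    (h1 : ∀ i, α i ≤ 1 / 4) :
    |(4 / π) * ∑ i : Fin d, (-1 : ℝ) ^ (i : ℕ) * Real.cos (2 * π * α i) -
      (4 / π) * ∑ i : Fin d, (-1 : ℝ) ^ (i : ℕ) * taylorCos k (1 / 8) (α i)| ≤ deltaM d k := by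
  have hterm : ∀ i : Fin d, |(-1 : ℝ) ^ (i : ℕ) * Real.cos (2 * π * α i) -
      (-1 : ℝ) ^ (i : ℕ) * taylorCos k (1 / 8) (α i)| ≤
      (2 * π) ^ (k + 1) * (1 / 8) ^ (k + 1) / (k + 1).factorial := fun i => by
    have hdist : |α i - 1 / 8| ≤ 1 / 8 := abs_le.2 ⟨by linarith [h0 i], by linarith [h1 i]⟩
    rw [← mul_sub, abs_mul, abs_neg_one_pow, one_mul]
    refine (abs_cos_sub_taylorCos_le k (1 / 8) (α i)).trans ?_
    gcongr
  rw [← mul_sub, ← Finset.sum_sub_distrib, abs_mul, abs_of_pos (by positivity : 0 < 4 / π)]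
  calc _ ≤ 4 / π * ∑ _i : Fin d, (2 * π) ^ (k + 1) * (1 / 8 : ℝ) ^ (k + 1) / (k + 1).factorial := by
        gcongr
        exact (Finset.abs_sum_le_sum_abs _ _).trans (Finset.sum_le_sum fun i _ => hterm i)
    _ = deltaM d k := by
        simp only [Finset.sum_const, Finset.card_univ, Fintype.card_fin, nsmul_eq_mul, deltaM]
        ring

theorem tendsto_deltaM (d : ℕ) : Tendsto (deltaM d) atTop (𝓝 0) := by
  have h := (((FloorSemiring.tendsto_pow_div_factorial_atTop (2 * π * (1 / 8))).comp
    (tendsto_add_atTop_nat 1)).const_mul (4 * (d : ℝ) / π))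
  rw [mul_zero] at h
  refine h.congr fun k => ?_
  simp only [Function.comp_apply, deltaM, mul_pow]
  ring

theorem isCompact_monotone_box (d : ℕ) :
    IsCompact {α : Fin d → ℝ | Monotone α ∧ (∀ i, 0 ≤ α i) ∧ ∀ i, α i ≤ 1 / 4} := by
  have hbox : IsCompact (Set.Icc (fun _ => 0) (fun _ => 1 / 4) : Set (Fin d → ℝ)) := isCompact_Icc
  exact hbox.inter_left isClosed_monotone

/-- Let d ≥ 1, m ∈ ℝ, and J : ℝ^d → ℝ continuous. If the exact feasible set S
is nonempty, then the optimal values of the level-k Taylor relaxations converge to the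
optimal value of the exact problem: lim_{k→∞} inf_{α ∈ S_k} J(α) = inf_{α ∈ S} J(α). -/
theorem relaxed_inf_tendsto_exact_inf (d : ℕ) (hd : 1 ≤ d) (m : ℝ)
    (J : (Fin d → ℝ) → ℝ) (hJ : Continuous J) (hne : (exactSet d m).Nonempty) :
    Filter.Tendsto (fun k : ℕ => sInf (J '' relaxedSet d m k)) Filter.atTop
      (nhds (sInf (J '' exactSet d m))) := by
  refine tendsto_sInf_image_of_squeeze_level (isCompact_monotone_box d)
    (g := fun α => (4 / π) * ∑ i : Fin d, (-1 : ℝ) ^ (i : ℕ) * Real.cos (2 * π * α i)) (m := m)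
    (ε := fun k => 2 * deltaM d k) (by fun_prop) hJ
    (by simpa using (tendsto_deltaM d).const_mul 2) hne ?_ ?_ ?_ ?_
  · rintro α ⟨hmono, h0, h1⟩ h
    exact ⟨hmono, h0, h1, h⟩
  · rintro k α ⟨hmono, h0, h1, h⟩
    have herr := abs_le.1 (abs_cos_sub_taylorCos_sum_le k h0 h1)
    exact ⟨hmono, h0, h1, by linarith, by linarith⟩
  · rintro k α ⟨hmono, h0, h1, -⟩
    exact ⟨hmono, h0, h1⟩
  · rintro k α ⟨-, h0, h1, hlower, hupper⟩
    have herr := abs_le.1 (abs_cos_sub_taylorCos_sum_le k h0 h1)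
    exact abs_le.2 ⟨by linarith, by linarith⟩
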